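/- Let P be a probability measure on ℝ^d, σ > 0, and let p_σ be the density of the Gaussian perturbation of P with variance σ². Then E_{X∼p_σ}‖∇log p_σ(X)‖² ≤ d/σ². -/

import Mathlib

open MeasureTheory Real

noncomputable section

namespace DiffusionKL

/-- Euclidean space `ℝ^d`. -/
abbrev Vec (d : ℕ) := EuclideanSpace ℝ (Fin d)

/-- Density of the isotropic Gaussian `N(m, v·I_d)` on `ℝ^d`. -/
def gaussDensity (d : ℕ) (m : Vec d) (v : ℝ) (x : Vec d) : ℝ :=
  (2 * π * v) ^ (-(d : ℝ) / 2) * Real.exp (-‖x - m‖ ^ 2 / (2 * v))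

/-- The isotropic Gaussian measure `N(m, v·I_d)` on `ℝ^d`. -/
def gaussMeasure (d : ℕ) (m : Vec d) (v : ℝ) : Measure (Vec d) :=
  MeasureTheory.volume.withDensity (fun x => ENNReal.ofReal (gaussDensity d m v x))

/-- The standard Gaussian measure `γ_d = N(0, I_d)` on `ℝ^d`. -/
def stdGauss (d : ℕ) : Measure (Vec d) := gaussMeasure d 0 1

/-- Kullback-Leibler divergence `KL(μ ‖ ν) = ∫ log (dμ/dν) dμ`. -/
def KLdiv {d : ℕ} (μ ν : Measure (Vec d)) : ℝ :=
  ∫ x, Real.log ((μ.rnDeriv ν x).toReal) ∂μ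

/-- `G_{t,s} = ∫_t^s g(u)² du`. -/
def Gvar (g : ℝ → ℝ) (t s : ℝ) : ℝ := ∫ u in t..s, (g u) ^ 2

/-- `α_{t,s} = exp(−G_{t,s}/2)`. -/
def alphaF (g : ℝ → ℝ) (t s : ℝ) : ℝ := Real.exp (-(Gvar g t s) / 2)

/-- `σ_t² = 1 − exp(−G_t)`. -/
def sigmaSq (g : ℝ → ℝ) (t : ℝ) : ℝ := 1 - Real.exp (-(Gvar g 0 t))

/-- The law of the forward marginal `x_t = α_t X₀ + σ_t Z`, `X₀ ∼ P`, `Z ∼ N(0,I_d)` indep. -/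
def forwardLaw (d : ℕ) (P : Measure (Vec d)) (g : ℝ → ℝ) (t : ℝ) : Measure (Vec d) :=
  Measure.map (fun q : Vec d × Vec d => alphaF g 0 t • q.1 + Real.sqrt (sigmaSq g t) • q.2)
    (P.prod (stdGauss d))

/-- Explicit density of the forward marginal `p_t` (for `t > 0`). -/
def forwardDensity (d : ℕ) (P : Measure (Vec d)) (g : ℝ → ℝ) (t : ℝ) (x : Vec d) : ℝ :=
  (2 * π * sigmaSq g t) ^ (-(d : ℝ) / 2) *
    ∫ y, Real.exp (-‖x - alphaF g 0 t • y‖ ^ 2 / (2 * sigmaSq g t)) ∂P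

/-- Score function `∇ log p` of a density `p`. -/
def scoreOf {d : ℕ} (p : Vec d → ℝ) (x : Vec d) : Vec d :=
  gradient (fun z => Real.log (p z)) x

/-- Score `∇ log p_t` of the forward marginal at time `t > 0`. -/
def fwdScore (d : ℕ) (P : Measure (Vec d)) (g : ℝ → ℝ) (t : ℝ) : Vec d → Vec d :=
  scoreOf (forwardDensity d P g t)

/-- Underlying measure for the joint forward coupling: `ω = (X₀, Z, Z')`. -/
def coupleMeasure (d : ℕ) (P : Measure (Vec d)) : Measure (Vec d × Vec d × Vec d) :=
  P.prod ((stdGauss d).prod (stdGauss d))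

/-- The forward process at time `t`: `x_t(ω) = α_t X₀ + σ_t Z`. -/
def xt (d : ℕ) (g : ℝ → ℝ) (t : ℝ) (ω : Vec d × Vec d × Vec d) : Vec d :=
  alphaF g 0 t • ω.1 + Real.sqrt (sigmaSq g t) • ω.2.1

/-- The forward process at time `s ≥ t`, coupled with `x_t` by
`x_s = α_{t,s} x_t + √(1−α_{t,s}²) Z'`. -/
def xts (d : ℕ) (g : ℝ → ℝ) (t s : ℝ) (ω : Vec d × Vec d × Vec d) : Vec d :=
  alphaF g t s • xt d g t ω + Real.sqrt (1 - (alphaF g t s) ^ 2) • ω.2.2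

/-- Law of a Markov chain after `n` steps, started at `init`, with transition kernels `κ`. -/
def chainLaw (d : ℕ) (init : Measure (Vec d)) (κ : ℕ → Vec d → Measure (Vec d)) :
    ℕ → Measure (Vec d)
  | 0 => init
  | k + 1 => (chainLaw d init κ k).bind (κ k)

/-- One step of the exponential-integrator sampler:
`ŷ_{k+1} | ŷ_k = a ∼ N(e^{G_{N−k}/2}·a + 2(e^{G_{N−k}/2} − 1)·s(a,t_{N−k}), (e^{G_{N−k}} − 1)·I_d)`. -/
def EIstep (d N : ℕ) (tp : ℕ → ℝ) (g : ℝ → ℝ) (sc : Vec d → ℝ → Vec d) (k : ℕ) (a : Vec d) :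
    Measure (Vec d) :=
  gaussMeasure d
    (Real.exp (Gvar g (tp (N - k - 1)) (tp (N - k)) / 2) • a +
      (2 * (Real.exp (Gvar g (tp (N - k - 1)) (tp (N - k)) / 2) - 1)) • sc a (tp (N - k)))
    (Real.exp (Gvar g (tp (N - k - 1)) (tp (N - k))) - 1)

/-- One step of the Euler–Maruyama sampler:
`ŷ_{k+1} | ŷ_k = a ∼ N((1 + G_{N−k}/2)·a + G_{N−k}·s(a,t_{N−k}), G_{N−k}·I_d)`. -/
def EMstep (d N : ℕ) (tp : ℕ → ℝ) (g : ℝ → ℝ) (sc : Vec d → ℝ → Vec d) (k : ℕ) (a : Vec d) :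
    Measure (Vec d) :=
  gaussMeasure d
    ((1 + Gvar g (tp (N - k - 1)) (tp (N - k)) / 2) • a +
      (Gvar g (tp (N - k - 1)) (tp (N - k))) • sc a (tp (N - k)))
    (Gvar g (tp (N - k - 1)) (tp (N - k)))

/-- Terminal law of the exponential-integrator sampler started at `N(0,I_d)`. -/
def EIlaw (d N : ℕ) (tp : ℕ → ℝ) (g : ℝ → ℝ) (sc : Vec d → ℝ → Vec d) : Measure (Vec d) :=
  chainLaw d (stdGauss d) (EIstep d N tp g sc) N

/-- Terminal law of the Euler–Maruyama sampler started at `N(0,I_d)`. -/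
def EMlaw (d N : ℕ) (tp : ℕ → ℝ) (g : ℝ → ℝ) (sc : Vec d → ℝ → Vec d) : Measure (Vec d) :=
  chainLaw d (stdGauss d) (EMstep d N tp g sc) N

/-- The weighted L² score estimation error
`(1/G_T)·Σ_{k=1}^N G_k·E_{p_{t_k}} ‖∇log p_{t_k}(x) − s(x,t_k)‖²`. -/
def scoreErr (d N : ℕ) (P : Measure (Vec d)) (g : ℝ → ℝ) (tp : ℕ → ℝ)
    (sc : Vec d → ℝ → Vec d) : ℝ :=
  (1 / Gvar g 0 (tp N)) * ∑ k ∈ Finset.range N,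
    Gvar g (tp k) (tp (k + 1)) *
      ∫ x, ‖fwdScore d P g (tp (k + 1)) x - sc x (tp (k + 1))‖ ^ 2
        ∂(forwardLaw d P g (tp (k + 1)))

/-- Entry `(i,j)` of the Hessian matrix `∇²f(x)`. -/
def hessEntry {d : ℕ} (f : Vec d → ℝ) (x : Vec d) (i j : Fin d) : ℝ :=
  fderiv ℝ (fun y => fderiv ℝ f y (EuclideanSpace.single j 1)) x (EuclideanSpace.single i 1)

/-- Frobenius norm of the Hessian matrix `∇²f(x)`. -/
def hessFrob {d : ℕ} (f : Vec d → ℝ) (x : Vec d) : ℝ :=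
  Real.sqrt (∑ i, ∑ j, (hessEntry f x i j) ^ 2)

/-- Density of the Gaussian perturbation `X + σZ`, `X ∼ P`, `Z ∼ N(0,I_d)`. -/
def perturbDensity (d : ℕ) (P : Measure (Vec d)) (σ : ℝ) (x : Vec d) : ℝ :=
  (2 * π * σ ^ 2) ^ (-(d : ℝ) / 2) * ∫ y, Real.exp (-‖x - y‖ ^ 2 / (2 * σ ^ 2)) ∂P

/-- Density of `μY + σZ`, `Y ∼ P`, `Z ∼ N(0,I_d)`. -/
def perturbDensity' (d : ℕ) (P : Measure (Vec d)) (μ σ : ℝ) (x : Vec d) : ℝ :=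
  (2 * π * σ ^ 2) ^ (-(d : ℝ) / 2) * ∫ y, Real.exp (-‖x - μ • y‖ ^ 2 / (2 * σ ^ 2)) ∂P

/-- Law of the Gaussian perturbation `X + σZ`. -/
def perturbLaw (d : ℕ) (P : Measure (Vec d)) (σ : ℝ) : Measure (Vec d) :=
  Measure.map (fun q : Vec d × Vec d => q.1 + σ • q.2)
    (P.prod (MeasureTheory.volume.withDensity
      (fun x : Vec d => ENNReal.ofReal ((2 * π) ^ (-(d : ℝ) / 2) * Real.exp (-‖x‖ ^ 2 / 2)))))

/-- The tilted conditional measure `dP̃_{μ,σ}(y|x) ∝ exp(−‖x−μy‖²/(2σ²)) dP(y)`. -/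
def tiltMeasure (d : ℕ) (P : Measure (Vec d)) (μ σ : ℝ) (x : Vec d) : Measure (Vec d) :=
  ((P.withDensity (fun y => ENNReal.ofReal (Real.exp (-‖x - μ • y‖ ^ 2 / (2 * σ ^ 2))))) Set.univ)⁻¹ •
    P.withDensity (fun y => ENNReal.ofReal (Real.exp (-‖x - μ • y‖ ^ 2 / (2 * σ ^ 2))))

/-- Sub-exponential (ψ₁-Orlicz) norm of `f` under the measure `μ`. -/
def psi1Norm {α : Type*} [MeasurableSpace α] (μ : Measure α) (f : α → ℝ) : ℝ :=
  sInf {t : ℝ | 0 < t ∧ ∫ x, Real.exp (|f x| / t) ∂μ ≤ 2}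

/-- Sub-Gaussian (ψ₂-Orlicz) norm of `f` under the measure `μ`. -/
def psi2Norm {α : Type*} [MeasurableSpace α] (μ : Measure α) (f : α → ℝ) : ℝ :=
  sInf {t : ℝ | 0 < t ∧ ∫ x, Real.exp ((f x) ^ 2 / t ^ 2) ∂μ ≤ 2}

/-!
By Tweedie's formula the score of `X + σZ` at `x` is the mean of `-(x - X) / σ²` under the
posterior law of `X` given `X + σZ = x`. Jensen's inequality bounds its squared norm by the
posterior mean of `‖x - X‖² / σ⁴`, and averaging over `x` turns this into
`E ‖(X + σZ) - X‖² / σ⁴ = E ‖Z‖² / σ² = dim E / σ²`.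
-/

section Gradient

variable {E : Type*} [NormedAddCommGroup E] [InnerProductSpace ℝ E] [CompleteSpace E]

lemma measurable_gradient [MeasurableSpace E] [BorelSpace E] (f : E → ℝ) :
    Measurable (gradient f) :=
  (InnerProductSpace.toDual ℝ E).symm.continuous.measurable.comp (measurable_fderiv ℝ f)

lemma toDual_integral {α : Type*} [MeasurableSpace α] {μ : Measure α} {g : α → E}
    (hg : Integrable g μ) :
    InnerProductSpace.toDual ℝ E (∫ a, g a ∂μ) = ∫ a, InnerProductSpace.toDual ℝ E (g a) ∂μ := by
  have hdual : Integrable (fun a => InnerProductSpace.toDual ℝ E (g a)) μ :=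
    hg.congr'_enorm
      ((InnerProductSpace.toDual ℝ E).continuous.comp_aestronglyMeasurable
        hg.aestronglyMeasurable) (by simp)
  ext v
  simp only [ContinuousLinearMap.integral_apply hdual, InnerProductSpace.toDual_apply_apply,
    real_inner_comm v, integral_inner hg]

lemma hasGradientAt_integral_of_dominated_of_gradient_le {α : Type*} [MeasurableSpace α]
    {μ : Measure α} {F : E → α → ℝ} {G : E → α → E} {x₀ : E} {s : Set E} {bound : α → ℝ}
    (hs : s ∈ nhds x₀) (hF_meas : ∀ᶠ x in nhds x₀, AEStronglyMeasurable (F x) μ)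
    (hF_int : Integrable (F x₀) μ) (hG_meas : AEStronglyMeasurable (G x₀) μ)
    (h_bound : ∀ᵐ a ∂μ, ∀ x ∈ s, ‖G x a‖ ≤ bound a) (bound_integrable : Integrable bound μ)
    (h_diff : ∀ᵐ a ∂μ, ∀ x ∈ s, HasGradientAt (F · a) (G x a) x) :
    HasGradientAt (fun x => ∫ a, F x a ∂μ) (∫ a, G x₀ a ∂μ) x₀ := by
  have hG_int : Integrable (G x₀) μ :=
    bound_integrable.mono' hG_meas (h_bound.mono fun _ h => h x₀ (mem_of_mem_nhds hs))
  rw [hasGradientAt_iff_hasFDerivAt, toDual_integral hG_int]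
  exact hasFDerivAt_integral_of_dominated_of_fderiv_le hs hF_meas hF_int
    ((InnerProductSpace.toDual ℝ E).continuous.comp_aestronglyMeasurable hG_meas)
    (by simpa using h_bound) bound_integrable
    (h_diff.mono fun _ h x hx => (h x hx).hasFDerivAt)

lemma gradient_log {f : E → ℝ} {x : E} (hf : DifferentiableAt ℝ f x) (hx : f x ≠ 0) :
    gradient (fun z => log (f z)) x = (f x)⁻¹ • gradient f x := by
  rw [gradient, fderiv.log hf hx, map_smulₛₗ]
  rfl

end Gradient

lemma enorm_integral_sq_le_lintegral_enorm_sq {α G : Type*} [MeasurableSpace α]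
    [NormedAddCommGroup G] [NormedSpace ℝ G] {μ : Measure α} [IsProbabilityMeasure μ] {f : α → G}
    (hf : AEStronglyMeasurable f μ) : ‖∫ a, f a ∂μ‖ₑ ^ 2 ≤ ∫⁻ a, ‖f a‖ₑ ^ 2 ∂μ := by
  calc ‖∫ a, f a ∂μ‖ₑ ^ 2 ≤ (∫⁻ a, ‖f a‖ₑ ∂μ) ^ 2 := by
        gcongr; exact enorm_integral_le_lintegral_enorm f
    _ = eLpNorm f 1 μ ^ 2 := by rw [eLpNorm_one_eq_lintegral_enorm]
    _ ≤ eLpNorm f 2 μ ^ 2 := by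
        gcongr; exact eLpNorm_le_eLpNorm_of_exponent_le one_le_two hf
    _ = ∫⁻ a, ‖f a‖ₑ ^ 2 ∂μ := by
        simpa using eLpNorm_nnreal_pow_eq_lintegral (f := f) (μ := μ) (two_ne_zero (α := NNReal))

section Smoothing

/-- The convolution of `P` with the unnormalised Gaussian kernel `exp (-‖u‖² / (2σ²))`: up to a
constant factor, the density of `X + σZ` when `X ∼ P` and `Z` is a standard Gaussian. -/
def gaussianSmoothing {E : Type*} [NormedAddCommGroup E] [MeasurableSpace E] (P : Measure E)
    (σ : ℝ) (x : E) : ℝ :=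
  ∫ y, exp (-‖x - y‖ ^ 2 / (2 * σ ^ 2)) ∂P

/-- The conditional law of `X ∼ P` given `X + σZ = x`, as the exponential tilting of `P` by the
Gaussian log-likelihood of `x`. -/
def gaussianPosterior {E : Type*} [NormedAddCommGroup E] [MeasurableSpace E] (P : Measure E)
    (σ : ℝ) (x : E) : Measure E :=
  P.tilted fun y => -‖x - y‖ ^ 2 / (2 * σ ^ 2)

variable {E : Type*} [NormedAddCommGroup E] [MeasurableSpace E] [BorelSpace E]
  [SecondCountableTopology E] (P : Measure E) (σ : ℝ)

lemma measurable_gaussianSmoothing [SFinite P] : Measurable (gaussianSmoothing P σ) :=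
  (StronglyMeasurable.integral_prod_right'
    (f := fun p : E × E => exp (-‖p.1 - p.2‖ ^ 2 / (2 * σ ^ 2))) (by fun_prop)).measurable

variable [IsFiniteMeasure P]

lemma integrable_exp_neg_sq_norm_sub_div (x : E) :
    Integrable (fun y => exp (-‖x - y‖ ^ 2 / (2 * σ ^ 2))) P := by
  refine Integrable.of_bound (by fun_prop) 1 (.of_forall fun y => ?_)
  rw [norm_of_nonneg (exp_nonneg _), exp_le_one_iff, neg_div, neg_nonpos]
  positivity

lemma gaussianSmoothing_pos [NeZero P] (x : E) : 0 < gaussianSmoothing P σ x :=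
  integral_exp_pos (integrable_exp_neg_sq_norm_sub_div P σ x)

instance [NeZero P] (x : E) : IsProbabilityMeasure (gaussianPosterior P σ x) :=
  isProbabilityMeasure_tilted (integrable_exp_neg_sq_norm_sub_div P σ x)

lemma ofReal_gaussianSmoothing_mul_lintegral_gaussianPosterior (x : E) (g : E → ENNReal) :
    ENNReal.ofReal (gaussianSmoothing P σ x) * ∫⁻ y, g y ∂(gaussianPosterior P σ x) =
      ∫⁻ y, ENNReal.ofReal (exp (-‖x - y‖ ^ 2 / (2 * σ ^ 2))) * g y ∂P := by
  rcases eq_zero_or_neZero P with rfl | _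
  · simp [gaussianPosterior]
  have hpos := gaussianSmoothing_pos P σ x
  rw [gaussianPosterior, lintegral_tilted, ← lintegral_const_mul' _ _ ENNReal.ofReal_ne_top]
  refine lintegral_congr fun y => ?_
  rw [← mul_assoc, ← ENNReal.ofReal_mul hpos.le]
  congr 2
  exact mul_div_cancel₀ _ hpos.ne'

end Smoothing

section Tweedie

lemma mul_exp_neg_sq_div_le {σ : ℝ} (hσ : σ ≠ 0) (r : ℝ) :
    r * exp (-r ^ 2 / (2 * σ ^ 2)) ≤ |σ| := by
  have hr : r = |σ| * (r / |σ|) := by field_simp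
  have hexp : r / |σ| ≤ exp (r ^ 2 / (2 * σ ^ 2)) := by
    calc r / |σ| ≤ (r / |σ|) ^ 2 / 2 + 1 := by nlinarith [sq_nonneg (r / |σ| - 1)]
      _ = r ^ 2 / (2 * σ ^ 2) + 1 := by rw [div_pow, sq_abs]; ring
      _ ≤ exp (r ^ 2 / (2 * σ ^ 2)) := add_one_le_exp _
  rw [neg_div, exp_neg, ← div_eq_mul_inv, div_le_iff₀ (exp_pos _)]
  calc r = |σ| * (r / |σ|) := hr
    _ ≤ |σ| * exp (r ^ 2 / (2 * σ ^ 2)) := by gcongr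

variable {E : Type*} [NormedAddCommGroup E] [InnerProductSpace ℝ E] [CompleteSpace E]

lemma hasGradientAt_exp_neg_sq_norm_sub_div (σ : ℝ) (x y : E) :
    HasGradientAt (fun z => exp (-‖z - y‖ ^ 2 / (2 * σ ^ 2)))
      (exp (-‖x - y‖ ^ 2 / (2 * σ ^ 2)) • -((σ ^ 2)⁻¹ • (x - y))) x := by
  have hexponent (z : E) : -‖z - y‖ ^ 2 / (2 * σ ^ 2) = -(2 * σ ^ 2)⁻¹ * ‖z - y‖ ^ 2 := by ring
  simp only [hexponent, hasGradientAt_iff_hasFDerivAt]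
  refine ((((hasFDerivAt_id x).sub_const y).norm_sq.const_mul _).exp).congr_fderiv ?_
  ext v
  simp only [mul_inv_rev, id_eq, neg_mul, map_sub, ContinuousLinearMap.comp_id, neg_smul, smul_neg,
    neg_apply, smul_apply, sub_apply, coe_innerSL_apply, nsmul_eq_mul, Nat.cast_ofNat, smul_eq_mul,
    map_neg, map_smul, InnerProductSpace.toDual_apply_apply]
  ring

variable [MeasurableSpace E] [BorelSpace E] [SecondCountableTopology E] (P : Measure E)
  [IsFiniteMeasure P] {σ : ℝ}

lemma hasGradientAt_gaussianSmoothing (hσ : σ ≠ 0) (x : E) :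
    HasGradientAt (gaussianSmoothing P σ)
      (∫ y, exp (-‖x - y‖ ^ 2 / (2 * σ ^ 2)) • -((σ ^ 2)⁻¹ • (x - y)) ∂P) x := by
  refine hasGradientAt_integral_of_dominated_of_gradient_le
    (G := fun z y => exp (-‖z - y‖ ^ 2 / (2 * σ ^ 2)) • -((σ ^ 2)⁻¹ • (z - y)))
    (bound := fun _ => (σ ^ 2)⁻¹ * |σ|) Filter.univ_mem
    (.of_forall fun z => by fun_prop) (integrable_exp_neg_sq_norm_sub_div P σ x) (by fun_prop)
    (.of_forall fun y z _ => ?_) (integrable_const _)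
    (.of_forall fun y z _ => hasGradientAt_exp_neg_sq_norm_sub_div σ z y)
  calc ‖exp (-‖z - y‖ ^ 2 / (2 * σ ^ 2)) • -((σ ^ 2)⁻¹ • (z - y))‖
      = (σ ^ 2)⁻¹ * (‖z - y‖ * exp (-‖z - y‖ ^ 2 / (2 * σ ^ 2))) := by
        rw [norm_smul, norm_neg, norm_smul, norm_of_nonneg (exp_nonneg _),
          norm_of_nonneg (by positivity)]
        ring
    _ ≤ (σ ^ 2)⁻¹ * |σ| := by gcongr; exact mul_exp_neg_sq_div_le hσ _

/-- Tweedie's formula. -/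
lemma gradient_log_gaussianSmoothing [NeZero P] (hσ : σ ≠ 0) (x : E) :
    gradient (fun z => log (gaussianSmoothing P σ z)) x =
      ∫ y, -((σ ^ 2)⁻¹ • (x - y)) ∂(gaussianPosterior P σ x) := by
  have hgrad := hasGradientAt_gaussianSmoothing P hσ x
  rw [gradient_log hgrad.differentiableAt (gaussianSmoothing_pos P σ x).ne', hgrad.gradient,
    gaussianPosterior, integral_tilted, ← integral_smul]
  simp only [div_eq_inv_mul, mul_smul, gaussianSmoothing]

end Tweedie

section StandardGaussian

open ProbabilityTheory

variable {E : Type*} [NormedAddCommGroup E] [InnerProductSpace ℝ E]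

/-- The Lebesgue density of the centred Gaussian on `E` with covariance `σ² • id`. -/
def isotropicGaussianPDF (σ : ℝ) (x : E) : ℝ :=
  (2 * π * σ ^ 2) ^ (-(Module.finrank ℝ E : ℝ) / 2) * exp (-‖x‖ ^ 2 / (2 * σ ^ 2))

lemma isotropicGaussianPDF_nonneg (σ : ℝ) (x : E) : 0 ≤ isotropicGaussianPDF σ x := by
  unfold isotropicGaussianPDF
  positivity

lemma measurable_isotropicGaussianPDF [MeasurableSpace E] [BorelSpace E] (σ : ℝ) :
    Measurable (isotropicGaussianPDF σ : E → ℝ) := by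
  unfold isotropicGaussianPDF
  fun_prop

lemma isotropicGaussianPDF_mul_cexp (σ : ℝ) (x t : E) :
    (isotropicGaussianPDF σ x : ℂ) * Complex.exp (inner ℝ x t * Complex.I) =
      ((2 * π * σ ^ 2 : ℝ) ^ (-(Module.finrank ℝ E : ℝ) / 2) : ℝ) *
        Complex.exp (-((2 * σ ^ 2)⁻¹ : ℝ) * ‖x‖ ^ 2 + Complex.I * inner ℝ t x) := by
  rw [isotropicGaussianPDF, Complex.ofReal_mul, Complex.ofReal_exp, mul_assoc, ← Complex.exp_add,
    real_inner_comm]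
  congr 2
  push_cast
  ring

variable [FiniteDimensional ℝ E] [MeasurableSpace E] [BorelSpace E]

lemma integral_isotropicGaussianPDF_mul_cexp {σ : ℝ} (hσ : σ ≠ 0) (t : E) :
    ∫ x : E, (isotropicGaussianPDF σ x : ℂ) * Complex.exp (inner ℝ x t * Complex.I) =
      Complex.exp (-‖σ • t‖ ^ 2 / 2) := by
  have hb : 0 < (2 * σ ^ 2)⁻¹ := by positivity
  have hvar : 0 < 2 * π * σ ^ 2 := by positivity
  have hnormalize : ((2 * π * σ ^ 2) ^ (-(Module.finrank ℝ E : ℝ) / 2) : ℝ) *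
      ((π / ((2 * σ ^ 2)⁻¹ : ℝ) : ℂ) ^ (Module.finrank ℝ E / 2 : ℂ)) = 1 := by
    have hbase : (π / ((2 * σ ^ 2)⁻¹ : ℝ) : ℂ) = (2 * π * σ ^ 2 : ℝ) := by
      push_cast
      field_simp
    have hexponent : (Module.finrank ℝ E / 2 : ℂ) = (Module.finrank ℝ E / 2 : ℝ) := by
      push_cast
      rfl
    rw [hbase, hexponent, ← Complex.ofReal_cpow hvar.le, ← Complex.ofReal_mul, neg_div,
      rpow_neg hvar.le, inv_mul_cancel₀ (rpow_pos_of_pos hvar _).ne', Complex.ofReal_one]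
  simp only [isotropicGaussianPDF_mul_cexp]
  rw [integral_const_mul, GaussianFourier.integral_cexp_neg_mul_sq_norm_add
    (by rwa [Complex.ofReal_re]), ← mul_assoc, hnormalize, one_mul, norm_smul, Complex.I_sq]
  congr 1
  push_cast
  rw [mul_pow, ← Complex.ofReal_pow ‖σ‖, norm_eq_abs, sq_abs]
  push_cast
  field_simp
  norm_num

lemma integrable_isotropicGaussianPDF {σ : ℝ} (hσ : σ ≠ 0) :
    Integrable (isotropicGaussianPDF σ : E → ℝ) := by
  have h := (GaussianFourier.integrable_cexp_neg_mul_sq_norm_add (V := E) (b := ((2 * σ ^ 2)⁻¹ : ℝ))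
    (by rw [Complex.ofReal_re]; positivity) Complex.I 0).const_mul
      ((2 * π * σ ^ 2 : ℝ) ^ (-(Module.finrank ℝ E : ℝ) / 2) : ℝ)
  simp only [← isotropicGaussianPDF_mul_cexp] at h
  simpa using h.re

lemma map_smul_stdGaussian {σ : ℝ} (hσ : σ ≠ 0) :
    (stdGaussian E).map (σ • ·) =
      volume.withDensity fun x => ENNReal.ofReal (isotropicGaussianPDF σ x) := by
  have := isFiniteMeasure_withDensity_ofReal (integrable_isotropicGaussianPDF (E := E) hσ).2
  refine Measure.ext_of_charFun (funext fun t => ?_)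
  rw [charFun_map_smul, charFun_stdGaussian, charFun_apply,
    integral_withDensity_eq_integral_toReal_smul
      (measurable_isotropicGaussianPDF σ).ennreal_ofReal
      (.of_forall fun _ => ENNReal.ofReal_lt_top),
    ← integral_isotropicGaussianPDF_mul_cexp hσ]
  simp only [ENNReal.toReal_ofReal (isotropicGaussianPDF_nonneg _ _), Complex.real_smul]

lemma lintegral_comp_add_smul_stdGaussian {σ : ℝ} (hσ : σ ≠ 0) (y : E) {f : E → ENNReal}
    (hf : Measurable f) :
    ∫⁻ z, f (y + σ • z) ∂(stdGaussian E) =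
      ∫⁻ x, ENNReal.ofReal (isotropicGaussianPDF σ (x - y)) * f x := by
  have hshift : Measurable fun u => f (y + u) := by fun_prop
  calc ∫⁻ z, f (y + σ • z) ∂(stdGaussian E)
      = ∫⁻ u, f (y + u) ∂((stdGaussian E).map (σ • ·)) :=
        (lintegral_map hshift (measurable_const_smul σ)).symm
    _ = ∫⁻ u, ENNReal.ofReal (isotropicGaussianPDF σ u) * f (y + u) := by
        rw [map_smul_stdGaussian hσ, lintegral_withDensity_eq_lintegral_mul _
          (measurable_isotropicGaussianPDF σ).ennreal_ofReal hshift]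
        rfl
    _ = ∫⁻ x, ENNReal.ofReal (isotropicGaussianPDF σ (x - y)) * f x := by
        rw [← lintegral_sub_right_eq_self _ y]
        simp only [add_sub_cancel]

lemma lintegral_inner_sq_stdGaussian (v : E) :
    ∫⁻ z, ENNReal.ofReal (inner ℝ v z ^ 2) ∂(stdGaussian E) = ‖v‖ₑ ^ 2 := by
  have hvar := ofReal_variance (μ := stdGaussian E) (X := innerSL ℝ v)
    (IsGaussian.memLp_dual _ _ 2 (by simp))
  rw [evariance_eq_lintegral_ofReal, integral_strongDual_stdGaussian, variance_dual_stdGaussian,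
    innerSL_apply_norm, ENNReal.ofReal_pow (norm_nonneg v), ofReal_norm] at hvar
  simpa using hvar.symm

lemma lintegral_enorm_sq_stdGaussian :
    ∫⁻ z, ‖z‖ₑ ^ 2 ∂(stdGaussian E) = Module.finrank ℝ E := by
  let b := stdOrthonormalBasis ℝ E
  have hparseval (z : E) : ‖z‖ₑ ^ 2 = ∑ i, ENNReal.ofReal (inner ℝ (b i) z ^ 2) := by
    rw [← ofReal_norm, ← ENNReal.ofReal_pow (norm_nonneg _), ← b.sum_sq_inner_right,
      ENNReal.ofReal_sum_of_nonneg fun _ _ => sq_nonneg _]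
  simp only [hparseval]
  rw [lintegral_finsetSum _ fun i _ => by fun_prop]
  simp only [lintegral_inner_sq_stdGaussian, b.enorm_eq_one]
  simp

end StandardGaussian

section Perturbation

open ProbabilityTheory

variable {E : Type*} [NormedAddCommGroup E] [InnerProductSpace ℝ E] [MeasurableSpace E]

/-- The Lebesgue density of `X + σZ`, where `X ∼ P` and `Z` is an independent standard Gaussian. -/
def gaussianPerturbationDensity (P : Measure E) (σ : ℝ) (x : E) : ℝ :=
  (2 * π * σ ^ 2) ^ (-(Module.finrank ℝ E : ℝ) / 2) * gaussianSmoothing P σ x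

/-- The score `∇ log p` of the Gaussian perturbation `X + σZ` of `X ∼ P`. -/
def gaussianPerturbationScore [CompleteSpace E] (P : Measure E) (σ : ℝ) : E → E :=
  gradient fun x => log (gaussianPerturbationDensity P σ x)

/-- The law of `X + σZ`, where `X ∼ P` and `Z` is an independent standard Gaussian. -/
def gaussianPerturbation [FiniteDimensional ℝ E] (P : Measure E) (σ : ℝ) : Measure E :=
  (P.prod (stdGaussian E)).map fun q => q.1 + σ • q.2

variable [FiniteDimensional ℝ E] [BorelSpace E] (P : Measure E) {σ : ℝ}

lemma lintegral_gaussianPerturbation {f : E → ENNReal} (hf : Measurable f) :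
    ∫⁻ x, f x ∂(gaussianPerturbation P σ) = ∫⁻ y, ∫⁻ z, f (y + σ • z) ∂(stdGaussian E) ∂P := by
  rw [gaussianPerturbation, lintegral_map hf (by fun_prop), lintegral_prod _ (by fun_prop)]

lemma lintegral_lintegral_isotropicGaussianPDF_mul [SFinite P] (hσ : σ ≠ 0)
    {F : E → E → ENNReal} (hF : Measurable (Function.uncurry F)) :
    ∫⁻ x, ∫⁻ y, ENNReal.ofReal (isotropicGaussianPDF σ (x - y)) * F x y ∂P =
      ∫⁻ y, ∫⁻ z, F (y + σ • z) y ∂(stdGaussian E) ∂P := by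
  rw [lintegral_lintegral_swap]
  · refine lintegral_congr fun y => ?_
    rw [lintegral_comp_add_smul_stdGaussian hσ y (f := fun x => F x y) hF.of_uncurry_right]
  · exact (((measurable_isotropicGaussianPDF σ).comp
      (measurable_fst.sub measurable_snd)).ennreal_ofReal.mul hF).aemeasurable

lemma measurable_gaussianPerturbationDensity [SFinite P] :
    Measurable (gaussianPerturbationDensity P σ) :=
  (measurable_gaussianSmoothing P σ).const_mul _

variable [IsFiniteMeasure P]

lemma ofReal_gaussianPerturbationDensity (x : E) :
    ENNReal.ofReal (gaussianPerturbationDensity P σ x) =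
      ∫⁻ y, ENNReal.ofReal (isotropicGaussianPDF σ (x - y)) ∂P := by
  rw [gaussianPerturbationDensity, gaussianSmoothing, ← integral_const_mul]
  exact ofReal_integral_eq_lintegral_ofReal
    ((integrable_exp_neg_sq_norm_sub_div P σ x).const_mul _)
    (.of_forall fun y => isotropicGaussianPDF_nonneg σ (x - y))

lemma gaussianPerturbation_eq_withDensity (hσ : σ ≠ 0) :
    gaussianPerturbation P σ =
      volume.withDensity fun x => ENNReal.ofReal (gaussianPerturbationDensity P σ x) := by
  refine Measure.ext_of_lintegral _ fun f hf => ?_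
  rw [lintegral_gaussianPerturbation P hf, lintegral_withDensity_eq_lintegral_mul _
    (measurable_gaussianPerturbationDensity P).ennreal_ofReal hf,
    ← lintegral_lintegral_isotropicGaussianPDF_mul P hσ (F := fun x _ => f x) (by fun_prop)]
  refine lintegral_congr fun x => ?_
  rw [Pi.mul_apply, ofReal_gaussianPerturbationDensity, lintegral_mul_const]
  exact ((measurable_isotropicGaussianPDF σ).comp (measurable_const_sub x)).ennreal_ofReal

lemma ofReal_gaussianPerturbationDensity_mul_lintegral_gaussianPosterior (x : E)
    (g : E → ENNReal) :
    ENNReal.ofReal (gaussianPerturbationDensity P σ x) * ∫⁻ y, g y ∂(gaussianPosterior P σ x) =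
      ∫⁻ y, ENNReal.ofReal (isotropicGaussianPDF σ (x - y)) * g y ∂P := by
  have hconst : 0 ≤ (2 * π * σ ^ 2) ^ (-(Module.finrank ℝ E : ℝ) / 2) := by positivity
  simp only [gaussianPerturbationDensity, isotropicGaussianPDF, ENNReal.ofReal_mul hconst,
    mul_assoc (ENNReal.ofReal _)]
  rw [ofReal_gaussianSmoothing_mul_lintegral_gaussianPosterior,
    lintegral_const_mul' _ _ ENNReal.ofReal_ne_top]

/-- Tower property: `E[E[F(X + σZ, X) | X + σZ]] = E[F(X + σZ, X)]`. -/
lemma lintegral_lintegral_gaussianPosterior (hσ : σ ≠ 0) {F : E → E → ENNReal}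
    (hF : Measurable (Function.uncurry F)) :
    ∫⁻ x, ∫⁻ y, F x y ∂(gaussianPosterior P σ x) ∂(gaussianPerturbation P σ) =
      ∫⁻ y, ∫⁻ z, F (y + σ • z) y ∂(stdGaussian E) ∂P := by
  rw [gaussianPerturbation_eq_withDensity P hσ,
    lintegral_withDensity_eq_lintegral_mul_non_measurable _
      (measurable_gaussianPerturbationDensity P).ennreal_ofReal
      (.of_forall fun _ => ENNReal.ofReal_lt_top),
    ← lintegral_lintegral_isotropicGaussianPDF_mul P hσ hF]
  exact lintegral_congr fun x =>
    ofReal_gaussianPerturbationDensity_mul_lintegral_gaussianPosterior P x (F x)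

lemma gaussianPerturbationScore_eq_integral [NeZero P] (hσ : σ ≠ 0) (x : E) :
    gaussianPerturbationScore P σ x =
      ∫ y, -((σ ^ 2)⁻¹ • (x - y)) ∂(gaussianPosterior P σ x) := by
  have hconst : (2 * π * σ ^ 2) ^ (-(Module.finrank ℝ E : ℝ) / 2) ≠ 0 := by positivity
  rw [← gradient_log_gaussianSmoothing P hσ]
  simp only [gaussianPerturbationScore, gaussianPerturbationDensity,
    log_mul hconst (gaussianSmoothing_pos P σ _).ne', gradient, fderiv_const_add]

lemma lintegral_enorm_gaussianPerturbationScore_sq_le [NeZero P] (hσ : σ ≠ 0) :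
    ∫⁻ x, ‖gaussianPerturbationScore P σ x‖ₑ ^ 2 ∂(gaussianPerturbation P σ) ≤
      P Set.univ * ENNReal.ofReal (Module.finrank ℝ E / σ ^ 2) := by
  have hnoise (y z : E) : ‖-((σ ^ 2)⁻¹ • (y + σ • z - y))‖ₑ ^ 2 =
      ENNReal.ofReal ((σ ^ 2)⁻¹) * ‖z‖ₑ ^ 2 := by
    have hscalar : (σ ^ 2)⁻¹ * σ = σ⁻¹ := by field_simp
    rw [add_sub_cancel_left, smul_smul, hscalar, enorm_neg, enorm_smul, mul_pow, ← ofReal_norm σ⁻¹,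
      ← ENNReal.ofReal_pow (norm_nonneg _), norm_eq_abs, sq_abs, inv_pow]
  calc ∫⁻ x, ‖gaussianPerturbationScore P σ x‖ₑ ^ 2 ∂(gaussianPerturbation P σ)
      ≤ ∫⁻ x, ∫⁻ y, ‖-((σ ^ 2)⁻¹ • (x - y))‖ₑ ^ 2 ∂(gaussianPosterior P σ x)
          ∂(gaussianPerturbation P σ) := by
        refine lintegral_mono fun x => ?_
        rw [gaussianPerturbationScore_eq_integral P hσ]
        exact enorm_integral_sq_le_lintegral_enorm_sq (by fun_prop)
    _ = ∫⁻ y, ∫⁻ z, ‖-((σ ^ 2)⁻¹ • (y + σ • z - y))‖ₑ ^ 2 ∂(stdGaussian E) ∂P :=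
        lintegral_lintegral_gaussianPosterior P hσ
          (F := fun x y => ‖-((σ ^ 2)⁻¹ • (x - y))‖ₑ ^ 2) (by fun_prop)
    _ = P Set.univ * ENNReal.ofReal (Module.finrank ℝ E / σ ^ 2) := by
        simp only [hnoise, lintegral_const_mul' _ _ ENNReal.ofReal_ne_top,
          lintegral_enorm_sq_stdGaussian, lintegral_const]
        rw [div_eq_inv_mul, ENNReal.ofReal_mul (by positivity), ENNReal.ofReal_natCast]
        ring

theorem statement17_general (hσ : σ ≠ 0) :
    Integrable (fun x => ‖gaussianPerturbationScore P σ x‖ ^ 2) (gaussianPerturbation P σ) ∧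
      ∫ x, ‖gaussianPerturbationScore P σ x‖ ^ 2 ∂(gaussianPerturbation P σ) ≤
        P.real Set.univ * (Module.finrank ℝ E / σ ^ 2) := by
  rcases eq_zero_or_neZero P with rfl | _
  · simp [gaussianPerturbation]
  have hbound : ∫⁻ x, ‖‖gaussianPerturbationScore P σ x‖ ^ 2‖ₑ ∂(gaussianPerturbation P σ) ≤
      P Set.univ * ENNReal.ofReal (Module.finrank ℝ E / σ ^ 2) := by
    simpa only [enorm_pow, enorm_norm] using lintegral_enorm_gaussianPerturbationScore_sq_le P hσ
  have htop : P Set.univ * ENNReal.ofReal (Module.finrank ℝ E / σ ^ 2) ≠ ⊤ := by finiteness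
  refine ⟨⟨((measurable_gradient _).norm.pow_const 2).aestronglyMeasurable,
    hbound.trans_lt htop.lt_top⟩, ?_⟩
  calc ∫ x, ‖gaussianPerturbationScore P σ x‖ ^ 2 ∂(gaussianPerturbation P σ)
      ≤ ‖∫ x, ‖gaussianPerturbationScore P σ x‖ ^ 2 ∂(gaussianPerturbation P σ)‖ :=
        le_norm_self _
    _ = ‖∫ x, ‖gaussianPerturbationScore P σ x‖ ^ 2 ∂(gaussianPerturbation P σ)‖ₑ.toReal :=
        (toReal_enorm _).symm
    _ ≤ (P Set.univ * ENNReal.ofReal (Module.finrank ℝ E / σ ^ 2)).toReal :=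
        ENNReal.toReal_mono htop ((enorm_integral_le_lintegral_enorm _).trans hbound)
    _ = P.real Set.univ * (Module.finrank ℝ E / σ ^ 2) := by
        rw [ENNReal.toReal_mul, ENNReal.toReal_ofReal (by positivity), measureReal_def]

end Perturbation

lemma scoreOf_perturbDensity (d : ℕ) (P : Measure (Vec d)) (σ : ℝ) :
    scoreOf (perturbDensity d P σ) = gaussianPerturbationScore P σ := by
  funext x
  simp only [scoreOf, perturbDensity, gaussianPerturbationScore, gaussianPerturbationDensity,
    gaussianSmoothing, finrank_euclideanSpace_fin]

lemma perturbLaw_eq (d : ℕ) (P : Measure (Vec d)) (σ : ℝ) :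
    perturbLaw d P σ = gaussianPerturbation P σ := by
  have hnoise := map_smul_stdGaussian (E := Vec d) one_ne_zero
  simp only [one_smul, Measure.map_id', isotropicGaussianPDF, one_pow, mul_one,
    finrank_euclideanSpace_fin] at hnoise
  rw [perturbLaw, gaussianPerturbation, hnoise]

/-- Lemma `score-bound` (2): second moment bound for the score of a
Gaussian perturbation. -/
theorem statement17 :
    ∀ (d : ℕ) (σ : ℝ) (P : Measure (Vec d)),
      IsProbabilityMeasure P → 0 < σ →
      (∫ x, ‖scoreOf (perturbDensity d P σ) x‖ ^ 2 ∂(perturbLaw d P σ)) ≤ d / σ ^ 2 := by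
  intro d σ P _ hσ
  simpa [perturbLaw_eq, scoreOf_perturbDensity] using (statement17_general P hσ.ne').2

end DiffusionKL
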